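/- For d ≥ 3, let P ⊂ ℝ^d be the simplex with vertices 0, e₁,…,e_{d−1}, and (d+1)(e₁+⋯+e_{d−1}) + (d+2)e_d. Then the point (1,1,…,1) lies in the interior of P, so μ_Ehr(P) = d, while Box(P) consists of the single point (⌊(d+1)/2⌋+1, …, ⌊(d+1)/2⌋+1, ⌊(d+1)/2⌋) of degree ⌊(d+1)/2⌋, so μ_hole(P) = ⌊(d+1)/2⌋ < d = μ_Ehr(P). -/

import Mathlib

open scoped BigOperators Pointwise

/-- Points of `ℝ^N`. -/
abbrev Pt (N : ℕ) := Fin N → ℝ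

/-- A point has integer coordinates. -/
def IsLat {N : ℕ} (x : Pt N) : Prop := ∀ i, ∃ z : ℤ, x i = (z : ℝ)

/-- Lattice points of a set. -/
def latPts {N : ℕ} (P : Set (Pt N)) : Set (Pt N) := {x ∈ P | IsLat x}

/-- The dilated polytope `kP`. -/
def dil {N : ℕ} (k : ℕ) (P : Set (Pt N)) : Set (Pt N) := (k : ℝ) • P

/-- `α` is a sum of `k` lattice points of `P`. -/
def DecomposesIn {N : ℕ} (P : Set (Pt N)) (k : ℕ) (α : Pt N) : Prop :=
  ∃ f : Fin k → Pt N, (∀ i, f i ∈ latPts P) ∧ α = ∑ i, f i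

/-- The integer decomposition property. -/
def HasIDP {N : ℕ} (P : Set (Pt N)) : Prop :=
  ∀ k : ℕ, 0 < k → ∀ α ∈ latPts (dil k P), DecomposesIn P k α

/-- Very ampleness: decomposition holds for all sufficiently large `k`. -/
def VeryAmple {N : ℕ} (P : Set (Pt N)) : Prop :=
  ∃ k₀ : ℕ, ∀ k, k₀ ≤ k → ∀ α ∈ latPts (dil k P), DecomposesIn P k α

/-- An integral convex polytope: the convex hull of finitely many lattice points
(which include all its vertices). -/
def IsIntegralPolytope {N : ℕ} (P : Set (Pt N)) : Prop :=
  ∃ V : Finset (Pt N), (∀ v ∈ V, IsLat v) ∧ P = convexHull ℝ (V : Set (Pt N))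

/-- Dimension of a polytope: the rank of the direction of its affine span. -/
noncomputable def polyDim {N : ℕ} (P : Set (Pt N)) : ℕ :=
  Module.finrank ℝ (affineSpan ℝ P).direction

/-- Lattice points of the cone `C(P) ⊂ ℝ^{N+1}` generated by `P̃ = P × {1}`;
a point of `ℝ^{N+1}` is represented as a pair `(x, deg)`. -/
def coneLat {N : ℕ} (P : Set (Pt N)) : Set (Pt N × ℝ) :=
  {p | (∃ (m : ℕ) (c : Fin m → ℝ) (w : Fin m → Pt N),
        (∀ i, 0 ≤ c i ∧ w i ∈ P) ∧ p.1 = ∑ i, c i • w i ∧ p.2 = ∑ i, c i)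
    ∧ IsLat p.1 ∧ ∃ z : ℤ, p.2 = (z : ℝ)}

/-- The monoid `ℤ_{≥0}(P̃ ∩ ℤ^{N+1})` generated by the degree-one lattice points of the cone. -/
def genMonoid {N : ℕ} (P : Set (Pt N)) : Set (Pt N × ℝ) :=
  {p | ∃ (m : ℕ) (f : Fin m → Pt N), (∀ i, f i ∈ latPts P) ∧
        p.1 = ∑ i, f i ∧ p.2 = (m : ℝ)}

/-- `H` is the minimal Hilbert basis of the cone `C(P)`. -/
def IsMinHilbertBasis {N : ℕ} (P : Set (Pt N)) (H : Set (Pt N × ℝ)) : Prop :=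
  (H.Finite ∧ H ⊆ coneLat P ∧
      coneLat P ⊆ (AddSubmonoid.closure H : Set (Pt N × ℝ))) ∧
  ∀ H' : Set (Pt N × ℝ),
    (H'.Finite ∧ H' ⊆ coneLat P ∧
      coneLat P ⊆ (AddSubmonoid.closure H' : Set (Pt N × ℝ))) → H ⊆ H'

/-- `v` lists the vertices of an empty `d`-simplex contained in `P`. -/
def EmptySimplexIn {N : ℕ} (P : Set (Pt N)) (d : ℕ) (v : Fin (d+1) → Pt N) : Prop :=
  (∀ i, v i ∈ latPts P) ∧ AffineIndependent ℝ v ∧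
    ∀ x ∈ convexHull ℝ (Set.range v), IsLat x → x ∈ Set.range v

/-- `Box(S)` of a simplex with vertex list `v`: lattice points
`Σ rᵢ (vᵢ, 1)` with `0 ≤ rᵢ < 1`. -/
def boxSimplex {N d : ℕ} (v : Fin (d+1) → Pt N) : Set (Pt N × ℝ) :=
  {p | ∃ r : Fin (d+1) → ℝ, (∀ i, 0 ≤ r i ∧ r i < 1) ∧
      p.1 = ∑ i, r i • v i ∧ p.2 = ∑ i, r i ∧ IsLat p.1 ∧ ∃ z : ℤ, p.2 = (z : ℝ)}

/-- `Box(P)`: holes of `P`, i.e. box points of empty `d`-simplices in `P` that are not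
nonnegative integer combinations of `P̃ ∩ ℤ^{N+1}`. -/
def boxP {N : ℕ} (P : Set (Pt N)) (d : ℕ) : Set (Pt N × ℝ) :=
  (⋃ v ∈ {v : Fin (d+1) → Pt N | EmptySimplexIn P d v}, boxSimplex v) \ genMonoid P

/-- Ehrhart counting function `|nP ∩ ℤ^N|`. -/
noncomputable def ehr {N : ℕ} (P : Set (Pt N)) (n : ℕ) : ℕ := (latPts (dil n P)).ncard

/-- The `δ`-vector of a `d`-dimensional polytope, via finite differences of the
Ehrhart counting function. -/
noncomputable def deltaVec {N : ℕ} (P : Set (Pt N)) (d i : ℕ) : ℤ :=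
  ∑ j ∈ Finset.range (i+1), (-1)^j * ((d+1).choose j) * (ehr P (i - j) : ℤ)

/-- Vertex set of the simplex of Example 2.4: `0`, `e₁, …, e_{d-1}`, and
`(d+1)(e₁+⋯+e_{d-1}) + (d+2)·e_d`. -/
def Vint (d : ℕ) : Set (Pt d) :=
  {0} ∪ {x : Pt d | ∃ k : Fin d, (k : ℕ) < d - 1 ∧ x = fun l => if l = k then (1:ℝ) else 0}
    ∪ {(fun k => if (k : ℕ) < d - 1 then ((d:ℝ) + 1) else ((d:ℝ) + 2) : Pt d)}

/-- The simplex of Example 2.4. -/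
def Pint (d : ℕ) : Set (Pt d) := convexHull ℝ (Vint d)

/-!
Write `n = d + 2`. Modulo the lattice, a box point of any simplex spanned by the vertices of `P`
and `(1, …, 1)` has the same coefficient `s` at all `d` vertices other than the origin; then the
coefficient of the origin is `2s` and that of `(1, …, 1)` is `-ns`, both modulo `ℤ`. Taking
coefficient `0` at `(1, …, 1)` shows that the only lattice points of `P` are its vertices and
`(1, …, 1)`. Hence an empty simplex misses some vertex of `P`, which forces `2s ∈ ℤ`: the value
`s = 0` gives the zero point and `s = 1/2` the hole. The hole is not a sum of lattice points of
`P`, because their last coordinates are `0`, `1` or `n` while its last coordinate exceeds its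
degree by one.

The `δ`-vector of any lattice simplex counts box points by degree, since subtracting the integer
parts of the coefficients splits a lattice point of the cone uniquely into a box point and a sum of
vertices. Replacing the barycentric coordinates of an interior lattice point by their complements
to `1` therefore shows `δ_d ≠ 0`.
-/

section Cone

variable {ι : Type*} [Fintype ι] {N : ℕ} {v : ι → Pt N}

/-- The lattice `ℤ^{N+1}`, inside `ℝ^N × ℝ` with the degree as second component. -/
def coneLattice (N : ℕ) : AddSubgroup (Pt N × ℝ) where
  carrier := {p | IsLat p.1 ∧ ∃ z : ℤ, p.2 = z}
  zero_mem' := ⟨fun _ => ⟨0, by simp⟩, 0, by simp⟩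
  add_mem' := by
    rintro p q ⟨hp, y, hy⟩ ⟨hq, z, hz⟩
    refine ⟨fun i => ?_, y + z, by simp [hy, hz]⟩
    obtain ⟨a, ha⟩ := hp i
    obtain ⟨b, hb⟩ := hq i
    exact ⟨a + b, by simp [ha, hb]⟩
  neg_mem' := by
    rintro p ⟨hp, y, hy⟩
    refine ⟨fun i => ?_, -y, by simp [hy]⟩
    obtain ⟨a, ha⟩ := hp i
    exact ⟨-a, by simp [ha]⟩

lemma mk_mem_coneLattice {x : Pt N} {t : ℝ} :
    (x, t) ∈ coneLattice N ↔ IsLat x ∧ ∃ z : ℤ, t = z :=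
  Iff.rfl

/-- Homogenisation of the family `v`: coefficients `c` are sent to the point `∑ cᵢ (vᵢ, 1)` of
the cone over `v`. -/
noncomputable def coneMap (v : ι → Pt N) : (ι → ℝ) →ₗ[ℝ] Pt N × ℝ :=
  Fintype.linearCombination ℝ fun i => (v i, (1 : ℝ))

lemma coneMap_apply (v : ι → Pt N) (c : ι → ℝ) : coneMap v c = (∑ i, c i • v i, ∑ i, c i) := by
  ext <;> simp [coneMap, Fintype.linearCombination_apply, Prod.fst_sum, Prod.snd_sum]

lemma coneMap_cons {n : ℕ} (x : Pt N) (v : Fin n → Pt N) (c : Fin (n + 1) → ℝ) :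
    coneMap (Fin.cons x v : Fin (n + 1) → Pt N) c =
      c 0 • (x, (1 : ℝ)) + coneMap v (fun i => c i.succ) := by
  simp [coneMap, Fintype.linearCombination_apply, Fin.sum_univ_succ]

lemma coneMap_natCast_mem (hv : ∀ i, IsLat (v i)) (a : ι → ℕ) :
    coneMap v (fun i => (a i : ℝ)) ∈ coneLattice N := by
  rw [coneMap, Fintype.linearCombination_apply]
  refine sum_mem fun i _ => ?_
  rw [Nat.cast_smul_eq_nsmul]
  exact nsmul_mem (mk_mem_coneLattice.2 ⟨hv i, 1, by simp⟩) (a i)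

lemma affineIndependent_iff_coneMap_injective :
    AffineIndependent ℝ v ↔ Function.Injective (coneMap v) := by
  rw [affineIndependent_iff_of_fintype, injective_iff_map_eq_zero]
  refine forall_congr' fun c => ⟨fun h hc => ?_, fun h hsum hc => ?_⟩
  · rw [coneMap_apply, Prod.mk_eq_zero] at hc
    exact funext (h hc.2 (by rw [Finset.univ.weightedVSub_eq_linear_combination hc.2, hc.1]))
  · rw [Finset.univ.weightedVSub_eq_linear_combination hsum] at hc
    exact congrFun (h (by rw [coneMap_apply, hc, hsum, Prod.mk_zero_zero]))

lemma mem_convexHull_range_iff {x : Pt N} :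
    x ∈ convexHull ℝ (Set.range v) ↔ ∃ c : ι → ℝ, 0 ≤ c ∧ coneMap v c = (x, 1) := by
  classical
  have hrange : Set.range v = Fintype.linearCombination ℝ v ''
      Set.range fun i j : ι => if i = j then (1 : ℝ) else 0 := by
    rw [← Set.range_comp]
    congr 1
    ext1 i
    simp [Fintype.linearCombination_apply]
  rw [hrange, ← LinearMap.image_convexHull, convexHull_basis_eq_stdSimplex]
  simp only [stdSimplex, coneMap_apply, Set.mem_image, Set.mem_ofPred_eq,
    Fintype.linearCombination_apply, Prod.mk.injEq, and_assoc, and_comm (a := ∑ _, _ = (1 : ℝ))]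
  rfl

lemma mem_dil_convexHull_range_iff [Nonempty ι] {k : ℕ} {x : Pt N} :
    x ∈ dil k (convexHull ℝ (Set.range v)) ↔ ∃ c : ι → ℝ, 0 ≤ c ∧ coneMap v c = (x, (k : ℝ)) := by
  rw [dil, Set.mem_smul_set]
  constructor
  · rintro ⟨y, hy, rfl⟩
    obtain ⟨c, hc, hcy⟩ := mem_convexHull_range_iff.1 hy
    exact ⟨(k : ℝ) • c, smul_nonneg k.cast_nonneg hc, by rw [map_smul, hcy]; simp⟩
  · rintro ⟨c, hc, hcx⟩
    rcases k.eq_zero_or_pos with rfl | hk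
    · have hc0 : c = 0 := by
        have hsum : ∑ i, c i = 0 := by simpa [coneMap_apply] using congrArg Prod.snd hcx
        exact (Fintype.sum_eq_zero_iff_of_nonneg hc).1 hsum
      obtain ⟨i⟩ := ‹Nonempty ι›
      refine ⟨v i, subset_convexHull ℝ _ ⟨i, rfl⟩, ?_⟩
      rw [hc0, map_zero] at hcx
      simpa using congrArg Prod.fst hcx
    · have hk' : (k : ℝ) ≠ 0 := by positivity
      refine ⟨(k : ℝ)⁻¹ • x, mem_convexHull_range_iff.2 ⟨(k : ℝ)⁻¹ • c, ?_, ?_⟩, ?_⟩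
      · exact smul_nonneg (by positivity) hc
      · rw [map_smul, hcx]
        simp [hk']
      · rw [smul_inv_smul₀ hk']

lemma mem_interior_convexHull_range_of_pos (hv : AffineIndependent ℝ v)
    (hcard : Fintype.card ι = N + 1) {c : ι → ℝ} (hc : ∀ i, 0 < c i) {x : Pt N}
    (hcx : coneMap v c = (x, 1)) : x ∈ interior (convexHull ℝ (Set.range v)) := by
  let b : AffineBasis ι ℝ (Pt N) :=
    ⟨v, hv, hv.affineSpan_eq_top_iff_card_eq_finrank_add_one.2 (by simp [hcard])⟩
  obtain ⟨hx, hsum⟩ : ∑ i, c i • v i = x ∧ ∑ i, c i = 1 :=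
    Prod.mk.inj ((coneMap_apply v c).symm.trans hcx)
  have hcomb : x = Finset.univ.affineCombination ℝ b c := by
    rw [Finset.affineCombination_eq_linear_combination _ _ _ hsum, ← hx]
    rfl
  change _ ∈ interior (convexHull ℝ (Set.range b))
  rw [b.interior_convexHull, hcomb]
  intro i
  rw [b.coord_apply_combination_of_mem (Finset.mem_univ i) hsum]
  exact hc i

end Cone

section Box

variable {d N : ℕ} {v : Fin (d + 1) → Pt N}

lemma mem_boxSimplex_iff {p : Pt N × ℝ} :
    p ∈ boxSimplex v ↔
      ∃ r : Fin (d + 1) → ℝ, (∀ i, r i ∈ Set.Ico 0 1) ∧ coneMap v r = p ∧ p ∈ coneLattice N := by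
  refine exists_congr fun r => and_congr_right fun _ => ?_
  rw [coneMap_apply, Prod.ext_iff, and_assoc]
  exact and_congr eq_comm (and_congr eq_comm Iff.rfl)

lemma mem_coneLattice_of_mem_boxSimplex {p : Pt N × ℝ} (hp : p ∈ boxSimplex v) :
    p ∈ coneLattice N :=
  let ⟨_, _, _, hlat⟩ := mem_boxSimplex_iff.1 hp
  hlat

lemma mem_range_or_mem_boxSimplex_of_mem_latPts {x : Pt N}
    (hx : x ∈ latPts (convexHull ℝ (Set.range v))) :
    x ∈ Set.range v ∨ (x, 1) ∈ boxSimplex v := by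
  obtain ⟨c, hc, hcx⟩ := mem_convexHull_range_iff.1 hx.1
  by_cases hlt : ∀ i, c i < 1
  · exact .inr (mem_boxSimplex_iff.2
      ⟨c, fun i => ⟨hc i, hlt i⟩, hcx, mk_mem_coneLattice.2 ⟨hx.2, 1, by simp⟩⟩)
  · left
    push Not at hlt
    obtain ⟨i, hi⟩ := hlt
    obtain ⟨hcx, hsum⟩ : ∑ i, c i • v i = x ∧ ∑ i, c i = 1 :=
      Prod.mk.inj ((coneMap_apply v c).symm.trans hcx)
    have hc' : c = Pi.single i 1 := by
      have hrest : ∀ j ≠ i, c j = 0 := by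
        have hsplit := Finset.add_sum_erase Finset.univ c (Finset.mem_univ i)
        have hpos : 0 ≤ ∑ j ∈ Finset.univ.erase i, c j := Finset.sum_nonneg fun j _ => hc j
        have hzero : ∑ j ∈ Finset.univ.erase i, c j = 0 := by linarith
        intro j hj
        exact (Finset.sum_eq_zero_iff_of_nonneg fun j _ => hc j).1 hzero j (by simp [hj])
      have hci : c i = 1 := by rw [← hsum]; exact (Fintype.sum_eq_single i hrest).symm
      ext j
      rcases eq_or_ne j i with rfl | hj
      · simpa using hci
      · simpa [hj] using hrest j hj
    exact ⟨i, by simpa [hc', Pi.single_apply] using hcx⟩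

lemma exists_box_coeff_of_range_subset {e : ℕ} {w : Fin (e + 1) → Pt N}
    (hv : Function.Injective v) (hvw : Set.range v ⊆ Set.range w) {p : Pt N × ℝ}
    (hp : p ∈ boxSimplex v) :
    ∃ c : Fin (e + 1) → ℝ, (∀ j, c j ∈ Set.Ico 0 1) ∧ coneMap w c = p ∧
      ∀ j, w j ∉ Set.range v → c j = 0 := by
  obtain ⟨r, hr, rfl, -⟩ := mem_boxSimplex_iff.1 hp
  choose σ hσ using fun i => hvw ⟨i, rfl⟩
  have hσinj : Function.Injective σ := fun i j hij => hv (by rw [← hσ, ← hσ, hij])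
  have hoff : ∀ j ∉ Set.range σ, Function.extend σ r 0 j = 0 := fun j hj =>
    Function.extend_apply' _ _ _ hj
  refine ⟨Function.extend σ r 0, fun j => ?_, ?_, fun j hj => hoff j ?_⟩
  · by_cases hj : j ∈ Set.range σ
    · obtain ⟨i, rfl⟩ := hj
      rw [hσinj.extend_apply]
      exact hr i
    · simp [hoff j hj]
  · rw [coneMap, coneMap, Fintype.linearCombination_apply, Fintype.linearCombination_apply]
    refine (Fintype.sum_of_injective σ hσinj _ _ (fun j hj => ?_) fun i => ?_).symm
    · rw [hoff j hj, zero_smul]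
    · rw [hσinj.extend_apply, hσ]
  · rintro ⟨i, rfl⟩
    exact hj ⟨i, (hσ i).symm⟩

end Box

section Ehrhart

open Finset.HasAntidiagonal (antidiagonal mem_antidiagonal)

variable {N : ℕ}

lemma finite_latPts_of_isBounded {s : Set (Pt N)} (hs : Bornology.IsBounded s) :
    (latPts s).Finite := by
  obtain ⟨a, ha⟩ := hs.bddBelow
  obtain ⟨b, hb⟩ := hs.bddAbove
  refine ((Set.finite_Icc (fun i => ⌈a i⌉) (fun i => ⌊b i⌋)).image
    fun (z : Fin N → ℤ) i => (z i : ℝ)).subset ?_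
  rintro x ⟨hx, hlat⟩
  choose z hz using hlat
  refine ⟨z, ⟨fun i => Int.ceil_le.2 ?_, fun i => Int.le_floor.2 ?_⟩, funext fun i => (hz i).symm⟩
  · exact hz i ▸ ha hx i
  · exact hz i ▸ hb hx i

variable {d : ℕ} {v : Fin (d + 1) → Pt N}

/-- The points of degree `j` in the box of a simplex. -/
def boxOfDegree (v : Fin (d + 1) → Pt N) (j : ℕ) : Set (Pt N × ℝ) := {p ∈ boxSimplex v | p.2 = j}

lemma finite_boxOfDegree (v : Fin (d + 1) → Pt N) (j : ℕ) : (boxOfDegree v j).Finite := by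
  have hbdd : Bornology.IsBounded (dil j (convexHull ℝ (Set.range v))) :=
    (isBounded_convexHull.2 (Set.finite_range v).isBounded).smul₀ (j : ℝ)
  refine ((finite_latPts_of_isBounded hbdd).image fun x => (x, (j : ℝ))).subset ?_
  rintro p ⟨hp, hdeg⟩
  obtain ⟨r, hr, hrp, hlat⟩ := mem_boxSimplex_iff.1 hp
  have hpj : (p.1, (j : ℝ)) = p := by rw [← hdeg]
  exact ⟨p.1, ⟨mem_dil_convexHull_range_iff.2 ⟨r, fun i => (hr i).1, hpj ▸ hrp⟩, hlat.1⟩, hpj⟩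

/-- Pairs of a box point and natural multiplicities of the vertices, of total degree `k`;
they index the lattice points of the `k`-th dilate of the simplex. -/
def boxDecompositions (v : Fin (d + 1) → Pt N) (k : ℕ) : Set ((Pt N × ℝ) × (Fin (d + 1) → ℕ)) :=
  {q | q.1 ∈ boxSimplex v ∧ q.1.2 + ∑ i, (q.2 i : ℝ) = k}

lemma exists_nat_degree_of_mem_boxSimplex {p : Pt N × ℝ} (hp : p ∈ boxSimplex v) :
    ∃ j : ℕ, p.2 = j := by
  obtain ⟨r, hr, -, hdeg, -, z, hz⟩ := hp
  have hz0 : 0 ≤ z := by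
    have : 0 ≤ p.2 := hdeg ▸ Finset.sum_nonneg fun i _ => (hr i).1
    exact_mod_cast hz ▸ this
  lift z to ℕ using hz0
  exact ⟨z, by simpa using hz⟩

lemma card_piAntidiag_univ (d k : ℕ) :
    ((Finset.univ : Finset (Fin (d + 1))).piAntidiag k).card = (d + k).choose d := by
  rw [← Finset.map_sym_eq_piAntidiag, Finset.card_map, Finset.sym_univ, Finset.card_univ,
    Sym.card_sym_eq_choose, Fintype.card_fin, Nat.add_right_comm, Nat.add_sub_cancel,
    Nat.choose_symm_add]

lemma ncard_boxDecompositions (v : Fin (d + 1) → Pt N) (k : ℕ) :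
    (boxDecompositions v k).ncard =
      ∑ ij ∈ antidiagonal k, (boxOfDegree v ij.1).ncard * (d + ij.2).choose d := by
  classical
  have hunion : boxDecompositions v k = ((antidiagonal k).biUnion fun ij =>
      (finite_boxOfDegree v ij.1).toFinset ×ˢ Finset.univ.piAntidiag ij.2 :
      Finset ((Pt N × ℝ) × (Fin (d + 1) → ℕ))) := by
    ext ⟨p, a⟩
    simp only [boxDecompositions, boxOfDegree, Set.mem_ofPred_eq, Finset.mem_coe,
      Finset.mem_biUnion, mem_antidiagonal, Finset.mem_product, Set.Finite.mem_toFinset,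
      Finset.mem_piAntidiag, Prod.exists]
    constructor
    · rintro ⟨hp, hdeg⟩
      obtain ⟨j, hj⟩ := exists_nat_degree_of_mem_boxSimplex hp
      rw [hj] at hdeg
      exact ⟨j, ∑ i, a i, by exact_mod_cast hdeg, ⟨hp, hj⟩, rfl, by simp⟩
    · rintro ⟨j, l, rfl, ⟨hp, hj⟩, rfl, -⟩
      exact ⟨hp, by rw [hj]; push_cast; rfl⟩
  rw [hunion, Set.ncard_coe_finset, Finset.card_biUnion]
  · refine Finset.sum_congr rfl fun ij _ => ?_
    rw [Finset.card_product, card_piAntidiag_univ, Set.ncard_eq_toFinset_card _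
      (finite_boxOfDegree v ij.1)]
  · rintro ⟨i, j⟩ - ⟨k, l⟩ - hne
    refine Finset.disjoint_left.2 fun ⟨p, a⟩ hij hkl => hne ?_
    simp only [boxOfDegree, Finset.mem_product, Set.Finite.mem_toFinset, Set.mem_ofPred_eq,
      Finset.mem_piAntidiag] at hij hkl
    have hik : i = k := by exact_mod_cast hij.1.2.symm.trans hkl.1.2
    rw [hik, ← hij.2.1, hkl.2.1]

/-- The lattice point recorded by a pair of a box point and multiplicities of the vertices. -/
def boxRecombine (v : Fin (d + 1) → Pt N) (q : (Pt N × ℝ) × (Fin (d + 1) → ℕ)) : Pt N :=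
  q.1.1 + ∑ i, q.2 i • v i

lemma coneMap_add_natCast_eq {r : Fin (d + 1) → ℝ} {q : (Pt N × ℝ) × (Fin (d + 1) → ℕ)} {k : ℕ}
    (hr : coneMap v r = q.1) (hdeg : q.1.2 + ∑ i, (q.2 i : ℝ) = k) :
    coneMap v (fun i => r i + q.2 i) = (boxRecombine v q, (k : ℝ)) := by
  have hsplit : (fun i => r i + (q.2 i : ℝ)) = r + fun i => (q.2 i : ℝ) := rfl
  rw [hsplit, map_add, hr, coneMap_apply]
  simp only [Nat.cast_smul_eq_nsmul]
  exact Prod.ext rfl hdeg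

lemma injOn_boxRecombine (hv : AffineIndependent ℝ v) (k : ℕ) :
    Set.InjOn (boxRecombine v) (boxDecompositions v k) := by
  rintro ⟨p, a⟩ ⟨hp, hpk⟩ ⟨q, b⟩ ⟨hq, hqk⟩ heq
  obtain ⟨r, hr, hrp, -⟩ := mem_boxSimplex_iff.1 hp
  obtain ⟨s, hs, hsq, -⟩ := mem_boxSimplex_iff.1 hq
  have hcoeff : ∀ i, r i + a i = s i + b i := congrFun
    (affineIndependent_iff_coneMap_injective.1 hv
      (by rw [coneMap_add_natCast_eq hrp hpk, coneMap_add_natCast_eq hsq hqk, heq]))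
  have hrs : r = s := by
    ext i
    rw [← Int.fract_eq_self.2 (hr i), ← Int.fract_eq_self.2 (hs i), ← Int.fract_add_natCast,
      hcoeff i, Int.fract_add_natCast]
  have hab : a = b := by
    ext i
    have := hcoeff i
    rw [hrs] at this
    exact_mod_cast add_left_cancel this
  have hpq : p = q := hrp.symm.trans (hrs ▸ hsq)
  rw [hpq, hab]

lemma image_boxRecombine (hv : ∀ i, IsLat (v i)) (k : ℕ) :
    boxRecombine v '' boxDecompositions v k = latPts (dil k (convexHull ℝ (Set.range v))) := by
  ext x
  constructor
  · rintro ⟨q, ⟨hq, hqk⟩, rfl⟩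
    obtain ⟨r, hr, hrq, hlat⟩ := mem_boxSimplex_iff.1 hq
    have hcone := coneMap_add_natCast_eq hrq hqk
    refine ⟨mem_dil_convexHull_range_iff.2
      ⟨_, fun i => add_nonneg (hr i).1 (Nat.cast_nonneg _), hcone⟩, ?_⟩
    have hmem := add_mem hlat (coneMap_natCast_mem hv q.2)
    rw [← hrq, ← map_add] at hmem
    exact (mk_mem_coneLattice.1 (hcone ▸ hmem)).1
  · rintro ⟨hx, hxlat⟩
    obtain ⟨c, hc, hcx⟩ := mem_dil_convexHull_range_iff.1 hx
    have hfract : coneMap v (fun i => Int.fract (c i)) =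
        (x, (k : ℝ)) - coneMap v fun i => (⌊c i⌋₊ : ℝ) := by
      rw [← hcx, ← map_sub]
      congr 1
      ext i
      simp [natCast_floor_eq_intCast_floor (hc i)]
    refine ⟨(coneMap v fun i => Int.fract (c i), fun i => ⌊c i⌋₊), ⟨?_, ?_⟩, ?_⟩
    · refine mem_boxSimplex_iff.2
        ⟨_, fun i => ⟨Int.fract_nonneg _, Int.fract_lt_one _⟩, rfl, ?_⟩
      rw [hfract]
      exact sub_mem (mk_mem_coneLattice.2 ⟨hxlat, k, by simp⟩) (coneMap_natCast_mem hv _)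
    · simp [hfract, coneMap_apply]
    · simp [boxRecombine, hfract, coneMap_apply, Nat.cast_smul_eq_nsmul]

lemma ehr_convexHull_range (hv : AffineIndependent ℝ v) (hlat : ∀ i, IsLat (v i)) (k : ℕ) :
    ehr (convexHull ℝ (Set.range v)) k =
      ∑ ij ∈ antidiagonal k, (boxOfDegree v ij.1).ncard * (d + ij.2).choose d := by
  rw [ehr, ← image_boxRecombine hlat, (injOn_boxRecombine hv k).ncard_image,
    ncard_boxDecompositions]

open PowerSeries

lemma coeff_one_sub_X_pow (n j : ℕ) :
    coeff j ((1 - X : ℤ⟦X⟧) ^ n) = (-1) ^ j * n.choose j := by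
  have hrescale : (1 - X : ℤ⟦X⟧) ^ n =
      rescale (-1) (((1 + Polynomial.X) ^ n : Polynomial ℤ) : ℤ⟦X⟧) := by
    simp [rescale_X, sub_eq_add_neg]
  rw [hrescale, coeff_rescale, Polynomial.coeff_coe, Polynomial.coeff_one_add_X_pow]

lemma deltaVec_eq_coeff (P : Set (Pt N)) (d i : ℕ) :
    deltaVec P d i = coeff i ((1 - X : ℤ⟦X⟧) ^ (d + 1) * mk fun k => (ehr P k : ℤ)) := by
  rw [coeff_mul, Finset.Nat.sum_antidiagonal_eq_sum_range_succ_mk]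
  simp only [coeff_one_sub_X_pow, coeff_mk]
  rfl

theorem deltaVec_convexHull_range (hv : AffineIndependent ℝ v) (hlat : ∀ i, IsLat (v i)) (i : ℕ) :
    deltaVec (convexHull ℝ (Set.range v)) d i = (boxOfDegree v i).ncard := by
  have hseries : (mk fun k => (ehr (convexHull ℝ (Set.range v)) k : ℤ)) =
      (mk fun j => ((boxOfDegree v j).ncard : ℤ)) * (mk 1) ^ (d + 1) := by
    ext k
    rw [mk_one_pow_eq_mk_choose_add, coeff_mul, coeff_mk, ehr_convexHull_range hv hlat]
    simp only [coeff_mk]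
    push_cast
    rfl
  rw [deltaVec_eq_coeff, hseries, mul_left_comm, ← mul_pow, mul_comm (1 - X),
    mk_one_mul_one_sub_eq_one, one_pow, mul_one, coeff_mk]

lemma deltaVec_convexHull_range_ne_zero (hv : AffineIndependent ℝ v) (hlat : ∀ i, IsLat (v i))
    {c : Fin (d + 1) → ℝ} (hc : ∀ i, 0 < c i) {x : Pt N} (hcx : coneMap v c = (x, 1))
    (hx : IsLat x) : deltaVec (convexHull ℝ (Set.range v)) d d ≠ 0 := by
  rw [deltaVec_convexHull_range hv hlat, Nat.cast_ne_zero, ← Nat.pos_iff_ne_zero,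
    Set.ncard_pos (finite_boxOfDegree v d)]
  have hsum : ∑ i, c i = 1 := (Prod.mk.inj ((coneMap_apply v c).symm.trans hcx)).2
  have hcle : ∀ i, c i ≤ 1 := fun i =>
    hsum ▸ Finset.single_le_sum (fun j _ => (hc j).le) (Finset.mem_univ i)
  refine ⟨coneMap v (1 - c), mem_boxSimplex_iff.2 ⟨1 - c, fun i => ?_, rfl, ?_⟩, ?_⟩
  · simpa using ⟨hcle i, hc i⟩
  · rw [map_sub, hcx]
    exact sub_mem (by simpa [Pi.one_def] using coneMap_natCast_mem hlat fun _ => 1)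
      (mk_mem_coneLattice.2 ⟨hx, 1, by simp⟩)
  · simp [coneMap_apply, hsum]

end Ehrhart

section Pint

variable {m : ℕ}

/-- The vertices `e₁, …, e_m` and `e_{m+1} + (m + 2)(1, …, 1)` of the facet of `Pint (m + 1)`
opposite the origin. -/
def pintFacet (m : ℕ) (j : Fin (m + 1)) : Pt (m + 1) := fun k =>
  (if k = j then 1 else 0) + if j = Fin.last m then (m : ℝ) + 2 else 0

/-- The pyramid with apex `(a, …, a)` over the facet of `Pint (m + 1)` opposite the origin. Apex
`0` gives `Pint (m + 1)` itself, apex `1` the empty simplex whose box contains the hole. -/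
def pintPyramid (m : ℕ) (a : ℝ) : Fin (m + 2) → Pt (m + 1) := Fin.cons (fun _ => a) (pintFacet m)

/-- The lattice points of `Pint (m + 1)`: the point `(1, …, 1)`, followed by the vertices. -/
def pintPoint (m : ℕ) : Fin (m + 3) → Pt (m + 1) := Fin.cons (fun _ => 1) (pintPyramid m 0)

/-- The unique element of `boxP (Pint d) d`. -/
def pintHole (d : ℕ) : Pt d × ℝ :=
  (fun _ => (((d + 1) / 2 : ℕ) : ℝ) + 1, (((d + 1) / 2 : ℕ) : ℝ))

lemma pintFacet_of_ne_last {j : Fin (m + 1)} (hj : j ≠ Fin.last m) :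
    pintFacet m j = fun k => if k = j then 1 else 0 := by
  ext k
  simp [pintFacet, if_neg hj]

lemma pintFacet_last :
    pintFacet m (Fin.last m) = fun k : Fin (m + 1) =>
      if (k : ℕ) < m then ((m + 1 : ℕ) : ℝ) + 1 else ((m + 1 : ℕ) : ℝ) + 2 := by
  ext k
  rcases eq_or_ne k (Fin.last m) with rfl | hk
  · simp only [pintFacet, if_true, Fin.val_last, lt_irrefl, if_false, Nat.cast_add, Nat.cast_one]
    ring
  · simp only [pintFacet, if_neg hk, if_true, Fin.val_lt_last hk, Nat.cast_add, Nat.cast_one]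
    ring

lemma range_pintFacet :
    Set.range (pintFacet m) =
      {x | ∃ k : Fin (m + 1), (k : ℕ) < m ∧ x = fun l => if l = k then (1 : ℝ) else 0} ∪
        {pintFacet m (Fin.last m)} := by
  ext x
  constructor
  · rintro ⟨j, rfl⟩
    rcases eq_or_ne j (Fin.last m) with rfl | hj
    · exact .inr rfl
    · exact .inl ⟨j, Fin.val_lt_last hj, pintFacet_of_ne_last hj⟩
  · rintro (⟨j, hj, rfl⟩ | rfl)
    · exact ⟨j, pintFacet_of_ne_last (Fin.ne_of_lt hj)⟩
    · exact ⟨Fin.last m, rfl⟩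

lemma Pint_succ (m : ℕ) : Pint (m + 1) = convexHull ℝ (Set.range (pintPyramid m 0)) := by
  rw [pintPyramid, Fin.range_cons, range_pintFacet, pintFacet_last, Set.insert_eq,
    ← Set.union_assoc, Pint, Vint]
  rfl

lemma coneMap_pintFacet (t : Fin (m + 1) → ℝ) :
    coneMap (pintFacet m) t = (fun k => t k + (m + 2) * t (Fin.last m), ∑ j, t j) := by
  rw [coneMap_apply]
  congr 1
  ext k
  simp [pintFacet, mul_add, Finset.sum_add_distrib, mul_comm]

lemma coneMap_pintPyramid (a : ℝ) (c : Fin (m + 2) → ℝ) :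
    coneMap (pintPyramid m a) c =
      (fun k => c 0 * a + (c k.succ + (m + 2) * c (Fin.last m).succ), ∑ j, c j) := by
  rw [pintPyramid, coneMap_cons, coneMap_pintFacet, Fin.sum_univ_succ c]
  ext <;>
    simp only [Prod.smul_mk, Prod.mk_add_mk, Pi.add_apply, Pi.smul_apply, smul_eq_mul, mul_one]

lemma coneMap_pintPoint (c : Fin (m + 3) → ℝ) :
    coneMap (pintPoint m) c =
      (fun k => c 0 + (c k.succ.succ + (m + 2) * c (Fin.last m).succ.succ), ∑ j, c j) := by
  rw [pintPoint, coneMap_cons, coneMap_pintPyramid, Fin.sum_univ_succ c]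
  ext <;> simp

lemma affineIndependent_pintPyramid {a : ℝ} (ha : (m + 1) * a ≠ m + 3) :
    AffineIndependent ℝ (pintPyramid m a) := by
  rw [affineIndependent_iff_coneMap_injective, injective_iff_map_eq_zero]
  intro c hc
  rw [coneMap_pintPyramid, Prod.mk_eq_zero, Fin.sum_univ_succ] at hc
  obtain ⟨hcoord, hsum⟩ := hc
  have hapex := congrFun hcoord (Fin.last m)
  have hconst : ∀ k : Fin (m + 1), c k.succ = c (Fin.last m).succ := fun k => by
    have hk := congrFun hcoord k
    simp only [Pi.zero_apply] at hk hapex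
    linarith
  simp only [hconst, Finset.sum_const, Finset.card_univ, Fintype.card_fin, nsmul_eq_mul,
    Nat.cast_add, Nat.cast_one, Pi.zero_apply] at hsum hapex
  have hlast : c (Fin.last m).succ = 0 := by
    have : ((m + 1) * a - (m + 3)) * c (Fin.last m).succ = 0 := by
      linear_combination a * hsum - hapex
    exact (mul_eq_zero.1 this).resolve_left (sub_ne_zero.2 ha)
  refine funext (Fin.cases ?_ fun k => (hconst k).trans hlast)
  rwa [hlast, mul_zero, add_zero] at hsum

lemma affineIndependent_pintPyramid_zero : AffineIndependent ℝ (pintPyramid m 0) :=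
  affineIndependent_pintPyramid (by rw [mul_zero]; positivity)

lemma isLat_pintPoint (j : Fin (m + 3)) : IsLat (pintPoint m j) := by
  intro k
  refine j.cases ⟨1, by simp [pintPoint]⟩ fun j => ?_
  refine j.cases ⟨0, by simp [pintPoint, pintPyramid]⟩ fun j => ?_
  refine ⟨(if k = j then 1 else 0) + if j = Fin.last m then (m : ℤ) + 2 else 0, ?_⟩
  simp [pintPoint, pintPyramid, pintFacet]

/-- The barycentric coordinates of `(1, …, 1)` in `Pint (m + 1)`, that of the origin first. -/
noncomputable def pintOneCoord (m : ℕ) : Fin (m + 2) → ℝ :=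
  Fin.cons (2 / (m + 3)) fun _ => 1 / (m + 3)

lemma pintOneCoord_pos (i : Fin (m + 2)) : 0 < pintOneCoord m i :=
  i.cases (by simp only [pintOneCoord, Fin.cons_zero]; positivity)
    fun i => by simp only [pintOneCoord, Fin.cons_succ]; positivity

lemma coneMap_pintOneCoord :
    coneMap (pintPyramid m 0) (pintOneCoord m) = (fun _ => 1, 1) := by
  have hn : (m : ℝ) + 3 ≠ 0 := by positivity
  rw [coneMap_pintPyramid, Fin.sum_univ_succ]
  simp only [pintOneCoord, Fin.cons_zero, Fin.cons_succ, Finset.sum_const, Finset.card_univ,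
    Fintype.card_fin, nsmul_eq_mul, Nat.cast_add, Nat.cast_one]
  congr 1
  · ext
    field_simp
    ring
  · field_simp
    ring

lemma exists_coeff_eq_of_coneMap_pintPoint_mem {c : Fin (m + 3) → ℝ} (hc : ∀ j, c j ∈ Set.Ico 0 1)
    (hlat : coneMap (pintPoint m) c ∈ coneLattice (m + 1)) :
    ∃ (s : ℝ) (y z : ℤ), (∀ k : Fin (m + 1), c k.succ.succ = s) ∧ c 0 = z - (m + 3) * s ∧
      c 1 = 2 * s - y ∧ (y = 0 ∨ y = 1) ∧
      coneMap (pintPoint m) c = (fun _ => (z : ℝ), (z : ℝ) - y) := by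
  rw [coneMap_pintPoint, Fin.sum_univ_succ, Fin.sum_univ_succ] at hlat ⊢
  obtain ⟨hcoord, w, hw⟩ := mk_mem_coneLattice.1 hlat
  obtain ⟨z, hz⟩ := hcoord (Fin.last m)
  have hconst : ∀ k : Fin (m + 1), c k.succ.succ = c (Fin.last m).succ.succ := fun k => by
    obtain ⟨x, hx⟩ := hcoord k
    rw [← Int.fract_eq_self.2 (hc k.succ.succ),
      ← Int.fract_eq_self.2 (hc (Fin.last m).succ.succ)]
    refine Int.fract_eq_fract.2 ⟨x - z, ?_⟩
    push_cast
    linarith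
  simp only [hconst, Finset.sum_const, Finset.card_univ, Fintype.card_fin, nsmul_eq_mul,
    Nat.cast_add, Nat.cast_one, Fin.succ_zero_eq_one] at hz hw ⊢
  have hy : c 1 = 2 * c (Fin.last m).succ.succ - (z - w : ℤ) := by
    push_cast
    linarith
  have hy01 : z - w = 0 ∨ z - w = 1 := by
    have hlast := hc (Fin.last m).succ.succ
    have hlower : (-1 : ℝ) < (z - w : ℤ) := by linarith [(hc 1).2, hlast.1]
    have hupper : ((z - w : ℤ) : ℝ) < 2 := by linarith [(hc 1).1, hlast.2]
    have : -1 < z - w := by exact_mod_cast hlower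
    have : z - w < 2 := by exact_mod_cast hupper
    omega
  refine ⟨_, z - w, z, fun _ => rfl, by linarith, hy, hy01, ?_⟩
  congr 1
  · exact funext fun _ => by linarith
  · push_cast
    linarith

lemma pintPyramid_zero_apply_last (i : Fin (m + 2)) :
    pintPyramid m 0 i (Fin.last m) = 0 ∨ pintPyramid m 0 i (Fin.last m) = m + 3 := by
  refine i.cases (.inl rfl) fun j => ?_
  rcases eq_or_ne j (Fin.last m) with rfl | hj
  · right
    simp only [pintPyramid, Fin.cons_succ, pintFacet, if_true]
    ring
  · left
    simp [pintPyramid, pintFacet, hj, hj.symm]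

lemma pintPoint_apply_last (j : Fin (m + 3)) :
    pintPoint m j (Fin.last m) = 0 ∨ pintPoint m j (Fin.last m) = 1 ∨
      pintPoint m j (Fin.last m) = m + 3 :=
  j.cases (.inr (.inl rfl)) fun i => (pintPyramid_zero_apply_last i).imp_right .inr

lemma pintPoint_zero_notMem_range_pintPyramid :
    pintPoint m 0 ∉ Set.range (pintPyramid m 0) := by
  rintro ⟨i, hi⟩
  have hlast : pintPyramid m 0 i (Fin.last m) = 1 := congrFun hi (Fin.last m)
  have hpos : (0 : ℝ) < m + 2 := by positivity
  rcases pintPyramid_zero_apply_last i with h | h <;> linarith [hpos]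

lemma pintPoint_zero_mem_interior_Pint : pintPoint m 0 ∈ interior (Pint (m + 1)) := by
  rw [Pint_succ]
  exact mem_interior_convexHull_range_of_pos affineIndependent_pintPyramid_zero (by simp)
    pintOneCoord_pos coneMap_pintOneCoord

lemma deltaVec_Pint_ne_zero : deltaVec (Pint (m + 1)) (m + 1) (m + 1) ≠ 0 := by
  rw [Pint_succ]
  exact deltaVec_convexHull_range_ne_zero affineIndependent_pintPyramid_zero
    (fun i => isLat_pintPoint i.succ) pintOneCoord_pos coneMap_pintOneCoord (isLat_pintPoint 0)

lemma pintPoint_mem_latPts_Pint (j : Fin (m + 3)) : pintPoint m j ∈ latPts (Pint (m + 1)) := by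
  refine ⟨?_, isLat_pintPoint j⟩
  refine j.cases (interior_subset pintPoint_zero_mem_interior_Pint) fun i => ?_
  rw [Pint_succ]
  exact subset_convexHull ℝ _ ⟨i, rfl⟩

lemma latPts_Pint (hm : 2 ≤ m) : latPts (Pint (m + 1)) = Set.range (pintPoint m) := by
  refine subset_antisymm (fun x hx => ?_) (Set.range_subset_iff.2 pintPoint_mem_latPts_Pint)
  rw [Pint_succ] at hx
  rcases mem_range_or_mem_boxSimplex_of_mem_latPts hx with ⟨i, rfl⟩ | hbox
  · exact ⟨i.succ, rfl⟩
  obtain ⟨c, hc, hcx, hoff⟩ := exists_box_coeff_of_range_subset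
    affineIndependent_pintPyramid_zero.injective (w := pintPoint m)
    (Set.range_subset_iff.2 fun i => ⟨i.succ, rfl⟩) hbox
  obtain ⟨s, y, z, -, h0, h1, hy, hyz⟩ := exists_coeff_eq_of_coneMap_pintPoint_mem hc
    (hcx ▸ mem_coneLattice_of_mem_boxSimplex hbox)
  have hzero : c 0 = 0 := hoff 0 pintPoint_zero_notMem_range_pintPyramid
  obtain ⟨hxz, hdeg⟩ := Prod.mk.inj (hyz.symm.trans hcx)
  refine ⟨0, ?_⟩
  rcases hy with rfl | rfl
  · simp only [Int.cast_zero, sub_zero] at hdeg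
    rw [← hxz, hdeg]
    rfl
  · have hβ := (hc 1).1
    rw [h1] at hβ
    have hm' : (2 : ℝ) ≤ m := by exact_mod_cast hm
    push_cast at hdeg hβ
    nlinarith

lemma exists_pintPyramid_notMem_range {v : Fin (m + 2) → Pt (m + 1)}
    (hv : EmptySimplexIn (Pint (m + 1)) (m + 1) v) :
    ∃ i, pintPyramid m 0 i ∉ Set.range v := by
  by_contra! hsub
  have heq : Set.range (pintPyramid m 0) = Set.range v := by
    refine Set.eq_of_subset_of_ncard_le (Set.range_subset_iff.2 hsub) ?_
    rw [Set.ncard_range_of_injective hv.2.1.injective,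
      Set.ncard_range_of_injective affineIndependent_pintPyramid_zero.injective]
  refine pintPoint_zero_notMem_range_pintPyramid (m := m) (heq ▸ hv.2.2 _ ?_ (isLat_pintPoint 0))
  rw [← heq, ← Pint_succ]
  exact (pintPoint_mem_latPts_Pint 0).1

lemma coneMap_pintPoint_eq_zero_or_eq_pintHole {c : Fin (m + 3) → ℝ}
    (hc : ∀ j, c j ∈ Set.Ico 0 1) (hlat : coneMap (pintPoint m) c ∈ coneLattice (m + 1))
    {i : Fin (m + 2)} (hi : c i.succ = 0) :
    coneMap (pintPoint m) c = 0 ∨ coneMap (pintPoint m) c = pintHole (m + 1) := by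
  obtain ⟨s, y, z, hs, h0, h1, hy, hyz⟩ := exists_coeff_eq_of_coneMap_pintPoint_mem hc hlat
  have hc0 := hc 0
  rw [h0] at hc0
  have hys : 2 * s = y := by
    revert hi
    refine i.cases (fun hi => by linarith [h1.symm.trans hi]) fun k hi => ?_
    have hc1 := hc 1
    rw [h1, ← hs k, hi] at hc1
    rw [← hs k, hi]
    rcases hy with rfl | rfl
    · simp
    · norm_num at hc1
  rw [hyz]
  rcases hy with rfl | rfl
  · left
    obtain rfl : s = 0 := by simpa using hys
    obtain rfl : z = 0 := by
      simp only [mul_zero, sub_zero] at hc0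
      have hz0 : 0 ≤ z := by exact_mod_cast hc0.1
      have hz1 : z < 1 := by exact_mod_cast hc0.2
      omega
    simp [Prod.ext_iff, funext_iff]
  · right
    have hz : (z : ℝ) = ((m + 1 + 1) / 2 : ℕ) + 1 := by
      have hlower : (m : ℝ) + 3 ≤ 2 * z := by push_cast at hys; nlinarith [hc0.1]
      have hupper : 2 * (z : ℝ) < m + 5 := by push_cast at hys; nlinarith [hc0.2]
      have : (m : ℤ) + 3 ≤ 2 * z := by exact_mod_cast hlower
      have : 2 * z < (m : ℤ) + 5 := by exact_mod_cast hupper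
      have hzint : z = ((m + 1 + 1) / 2 : ℕ) + 1 := by omega
      rw [hzint, Int.cast_add, Int.cast_natCast, Int.cast_one]
    rw [hz, pintHole, Int.cast_one, add_sub_cancel_right]

lemma eq_pintHole_of_mem_boxP (hm : 2 ≤ m) {p : Pt (m + 1) × ℝ}
    (hp : p ∈ boxP (Pint (m + 1)) (m + 1)) : p = pintHole (m + 1) := by
  obtain ⟨hbox, hgen⟩ := hp
  obtain ⟨v, hv, hpv⟩ := Set.mem_iUnion₂.1 hbox
  obtain ⟨i, hi⟩ := exists_pintPyramid_notMem_range hv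
  obtain ⟨c, hc, rfl, hoff⟩ := exists_box_coeff_of_range_subset hv.2.1.injective
    (Set.range_subset_iff.2 fun j => latPts_Pint hm ▸ hv.1 j) hpv
  refine (coneMap_pintPoint_eq_zero_or_eq_pintHole hc ?_ (hoff i.succ hi)).resolve_left ?_
  · exact mem_coneLattice_of_mem_boxSimplex hpv
  · intro hzero
    exact hgen ⟨0, Fin.elim0, fun i => i.elim0, by simp [hzero], by simp [hzero]⟩

lemma zero_notMem_convexHull_range_pintPyramid_one :
    (0 : Pt (m + 1)) ∉ convexHull ℝ (Set.range (pintPyramid m 1)) := by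
  intro hzero
  obtain ⟨c, hc, hc0⟩ := mem_convexHull_range_iff.1 hzero
  have hnonneg : ∀ i, 0 ≤ c i := hc
  obtain ⟨hcoord, hsum⟩ := Prod.mk.inj ((coneMap_pintPyramid 1 c).symm.trans hc0)
  have hcoord' : ∀ k : Fin (m + 1), c 0 * 1 + (c k.succ + (m + 2) * c (Fin.last m).succ) = 0 :=
    congrFun hcoord
  have hlast : 0 ≤ (m + 2) * c (Fin.last m).succ := mul_nonneg (by positivity) (hnonneg _)
  have hvanish : ∀ i, c i = 0 := Fin.cases
    (by linarith [hcoord' (Fin.last m), hnonneg 0, hnonneg (Fin.last m).succ])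
    fun k => by linarith [hcoord' k, hnonneg 0, hnonneg k.succ]
  simp [hvanish] at hsum

lemma emptySimplexIn_pintPyramid_one (hm : 2 ≤ m) :
    EmptySimplexIn (Pint (m + 1)) (m + 1) (pintPyramid m 1) := by
  have hmem : ∀ i, pintPyramid m 1 i ∈ latPts (Pint (m + 1)) := fun i =>
    i.cases (pintPoint_mem_latPts_Pint 0) fun j => pintPoint_mem_latPts_Pint j.succ.succ
  refine ⟨hmem, affineIndependent_pintPyramid (by intro h; linarith), fun x hx hlat => ?_⟩
  have hxP : x ∈ latPts (Pint (m + 1)) :=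
    ⟨convexHull_min (Set.range_subset_iff.2 fun i => (hmem i).1) (convex_convexHull ℝ _) hx, hlat⟩
  rw [latPts_Pint hm] at hxP
  obtain ⟨j, rfl⟩ := hxP
  revert hx
  refine j.cases (fun _ => ⟨0, rfl⟩) fun i => i.cases (fun hx => ?_) fun k _ => ⟨k.succ, rfl⟩
  exact absurd hx zero_notMem_convexHull_range_pintPyramid_one

lemma pintHole_mem_boxSimplex : pintHole (m + 1) ∈ boxSimplex (pintPyramid m 1) := by
  rw [mem_boxSimplex_iff]
  set b := (m + 1 + 1) / 2 with hb
  refine ⟨Fin.cons (b + 1 - (m + 3) / 2) fun _ => 1 / 2, ?_, ?_, ?_⟩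
  · have hlower : (m : ℝ) + 3 ≤ 2 * (b + 1) := by
      exact_mod_cast (by omega : m + 3 ≤ 2 * (b + 1))
    have hupper : 2 * ((b : ℝ) + 1) < m + 5 := by
      exact_mod_cast (by omega : 2 * (b + 1) < m + 5)
    refine Fin.cases ?_ fun _ => ?_
    · exact ⟨by rw [Fin.cons_zero]; linarith, by rw [Fin.cons_zero]; linarith⟩
    · norm_num
  · rw [coneMap_pintPyramid, Fin.sum_univ_succ, pintHole, ← hb]
    simp only [Fin.cons_zero, Fin.cons_succ, Finset.sum_const, Finset.card_univ, Fintype.card_fin,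
      nsmul_eq_mul, Nat.cast_add, Nat.cast_one]
    congr 1
    · ext
      ring
    · ring
  · exact mk_mem_coneLattice.2 ⟨fun _ => ⟨b + 1, by push_cast; rfl⟩, b, by push_cast; rfl⟩

lemma pintHole_notMem_genMonoid (hm : 2 ≤ m) : pintHole (m + 1) ∉ genMonoid (Pint (m + 1)) := by
  rintro ⟨n, f, hf, hsum, hdeg⟩
  obtain rfl : (m + 1 + 1) / 2 = n := Nat.cast_injective hdeg
  have hlast : ∑ i, f i (Fin.last m) = ((m + 1 + 1) / 2 : ℕ) + 1 := by
    rw [← Finset.sum_apply, ← hsum]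
    rfl
  have hvalues : ∀ i, f i (Fin.last m) = 0 ∨ f i (Fin.last m) = 1 ∨ f i (Fin.last m) = m + 3 := by
    intro i
    obtain ⟨j, hj⟩ := latPts_Pint hm ▸ hf i
    exact hj ▸ pintPoint_apply_last j
  have hnonneg : ∀ i, 0 ≤ f i (Fin.last m) := fun i => by
    rcases hvalues i with h | h | h <;> rw [h] <;> positivity
  have hle_one : ∀ i, f i (Fin.last m) ≤ 1 := fun i => by
    have hle := Finset.single_le_sum (fun i _ => hnonneg i) (Finset.mem_univ i)
    have hlt : (((m + 1 + 1) / 2 : ℕ) : ℝ) + 1 < m + 3 := by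
      exact_mod_cast (by omega : (m + 1 + 1) / 2 + 1 < m + 3)
    rcases hvalues i with h | h | h <;> linarith
  have hle_card := Finset.sum_le_card_nsmul Finset.univ _ 1 fun i _ => hle_one i
  rw [hlast, Finset.card_univ, Fintype.card_fin, nsmul_eq_mul, mul_one] at hle_card
  linarith

theorem boxP_Pint (hm : 2 ≤ m) : boxP (Pint (m + 1)) (m + 1) = {pintHole (m + 1)} := by
  refine Set.eq_singleton_iff_unique_mem.2 ⟨⟨?_, pintHole_notMem_genMonoid hm⟩, fun p hp =>
    eq_pintHole_of_mem_boxP hm hp⟩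
  exact Set.mem_biUnion (emptySimplexIn_pintPyramid_one hm) pintHole_mem_boxSimplex

end Pint

/-- `(1,…,1)` is an interior lattice point of `P` (so `μ_Ehr(P) = d`),
while `Box(P)` is the single point `(b+1,…,b+1)` of degree `b = ⌊(d+1)/2⌋`,
so `μ_hole(P) = ⌊(d+1)/2⌋ < d = μ_Ehr(P)`. -/
theorem interior_point_and_box_of_Pint (d : ℕ) (hd : 3 ≤ d) :
    ((fun _ => (1:ℝ) : Pt d) ∈ interior (Pint d)) ∧ IsLat (fun _ => (1:ℝ) : Pt d) ∧
    IsGreatest {i : ℕ | i ≤ d ∧ deltaVec (Pint d) d i ≠ 0} d ∧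
    boxP (Pint d) d =
      {(((fun _ => (((d+1)/2 : ℕ) : ℝ) + 1) : Pt d), (((d+1)/2 : ℕ) : ℝ))} ∧
    IsGreatest {t : ℝ | ∃ p ∈ boxP (Pint d) d, p.2 = t} (((d+1)/2 : ℕ) : ℝ) ∧
    (d+1)/2 < d := by
  obtain ⟨m, rfl⟩ : ∃ m, d = m + 1 := ⟨d - 1, by omega⟩
  have hbox : boxP (Pint (m + 1)) (m + 1) = {pintHole (m + 1)} := boxP_Pint (by omega)
  refine ⟨pintPoint_zero_mem_interior_Pint, isLat_pintPoint 0,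
    ⟨⟨le_rfl, deltaVec_Pint_ne_zero⟩, fun i hi => hi.1⟩, hbox, ?_, by omega⟩
  rw [hbox]
  refine ⟨⟨_, rfl, rfl⟩, ?_⟩
  rintro t ⟨p, rfl, rfl⟩
  exact le_rfl
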